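/- arXiv:2501.12261 — 8 statements merged into one kernel-verified Lean document; each statement's English description precedes it below -/
import Mathlib

section
/- Let V be a finite set, let ℓ ≥ 1 be an integer, and let L^0, …, L^ℓ be pairwise disjoint subsets of V whose union is V. Let δ, ε ∈ (0,1), let k ≥ 1 be an integer, and let S_1, …, S_k be subsets of V. If ℓ + 1 ≥ 2k/δ + 2/ε, then there exists an index p ∈ {0, …, ℓ} such that simultaneously: (i) |S_h ∩ L^p| ≤ (δ/2)·|S_h| for every h ∈ {1,…,k}, and (ii) ∑_{i≠j} |(S_i ∩ L^p) Δ (S_j ∩ L^p)| ≤ (ε/2)·∑_{i≠j} |S_i Δ S_j|, where both sums range over ordered pairs i ≠ j in {1,…,k}. -/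
open Finset

theorem markov_aux {ι : Type*} [Fintype ι] (f : ι → ℝ) (hf : ∀ i, 0 ≤ f i) (T c : ℝ)
    (hT : ∑ i, f i = T) (hc : 0 < c) :
    (((Finset.univ.filter (fun i => c * T < f i)).card : ℕ) : ℝ) < 1 / c := by
  rcases (Finset.univ.filter (fun i => c * T < f i)).eq_empty_or_nonempty with h | h
  · rw [h]; simpa using hc
  · have h1 : ∑ i ∈ Finset.univ.filter (fun i => c * T < f i), c * T
        < ∑ i ∈ Finset.univ.filter (fun i => c * T < f i), f i :=
      Finset.sum_lt_sum_of_nonempty h (fun i hi => (Finset.mem_filter.mp hi).2)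
    have h2 : ∑ i ∈ Finset.univ.filter (fun i => c * T < f i), f i ≤ ∑ i, f i :=
      Finset.sum_le_sum_of_subset_of_nonneg (Finset.filter_subset _ _) (fun i _ _ => hf i)
    have hT0 : 0 ≤ T := hT ▸ Finset.sum_nonneg (fun i _ => hf i)
    rw [Finset.sum_const, nsmul_eq_mul] at h1
    rw [lt_div_iff₀ hc]
    by_contra! hcon
    nlinarith [mul_le_mul_of_nonneg_right hcon hT0]

theorem card_part_aux {V ι : Type*} [Fintype V] [DecidableEq V] [Fintype ι]
    (L : ι → Finset V) (hdisj : ∀ p q, p ≠ q → Disjoint (L p) (L q))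
    (hcover : Finset.univ.biUnion L = (Finset.univ : Finset V)) (A : Finset V) :
    ∑ p, ((A ∩ L p).card : ℝ) = (A.card : ℝ) := by
  classical
  have h : A = Finset.univ.biUnion (fun p => A ∩ L p) := by
    rw [← Finset.inter_biUnion, hcover, Finset.inter_univ]
  conv_rhs => rw [h]
  rw [Finset.card_biUnion]
  · push_cast; rfl
  · intro p _ q _ hpq
    exact (hdisj p q hpq).mono Finset.inter_subset_right Finset.inter_subset_right

/-- Marginal strata lemma (existence of a marginal stratum):
given a partition `L 0, …, L ℓ` of a finite set `V` and subsets `S 1, …, S k`,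
if `ℓ + 1 ≥ 2k/δ + 2/ε` then some part `L p` intersects every `S h` in at most a `δ/2`
fraction of its size, and contributes at most an `ε/2` fraction of the total pairwise
diversity (sum of symmetric differences over ordered pairs `i ≠ j`). -/
theorem marginal_strata {V : Type*} [Fintype V] [DecidableEq V]
    (ℓ : ℕ) (hℓ : 1 ≤ ℓ)
    (L : Fin (ℓ + 1) → Finset V)
    (hdisj : ∀ p q : Fin (ℓ + 1), p ≠ q → Disjoint (L p) (L q))
    (hcover : Finset.univ.biUnion L = (Finset.univ : Finset V))
    (δ ε : ℝ) (hδ0 : 0 < δ) (hδ1 : δ < 1) (hε0 : 0 < ε) (hε1 : ε < 1)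
    (k : ℕ) (hk : 1 ≤ k)
    (S : Fin k → Finset V)
    (hbound : 2 * k / δ + 2 / ε ≤ ((ℓ : ℝ) + 1)) :
    ∃ p : Fin (ℓ + 1),
      (∀ h : Fin k, ((S h ∩ L p).card : ℝ) ≤ (δ / 2) * (S h).card) ∧
      (∑ ij ∈ (Finset.univ : Finset (Fin k)).offDiag,
          ((symmDiff (S ij.1 ∩ L p) (S ij.2 ∩ L p)).card : ℝ))
        ≤ (ε / 2) * ∑ ij ∈ (Finset.univ : Finset (Fin k)).offDiag,
            ((symmDiff (S ij.1) (S ij.2)).card : ℝ) := by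
  have hsd : ∀ (A B C : Finset V), symmDiff (A ∩ C) (B ∩ C) = symmDiff A B ∩ C := by
    intro A B C
    ext x
    simp only [Finset.mem_symmDiff, Finset.mem_inter]
    tauto
  simp only [hsd]
  by_contra! hcon
  set D := ∑ ij ∈ (Finset.univ : Finset (Fin k)).offDiag,
            ((symmDiff (S ij.1) (S ij.2)).card : ℝ) with hD
  set g : Fin (ℓ + 1) → ℝ := fun p => ∑ ij ∈ (Finset.univ : Finset (Fin k)).offDiag,
            ((symmDiff (S ij.1) (S ij.2) ∩ L p).card : ℝ) with hg
  have hgs : ∑ p, g p = D := by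
    rw [hg, hD, Finset.sum_comm]
    exact Finset.sum_congr rfl (fun ij _ => card_part_aux L hdisj hcover _)
  have hB := markov_aux g (fun p => Finset.sum_nonneg (fun _ _ => Nat.cast_nonneg _)) D (ε / 2)
    hgs (by positivity)
  have hA := fun h : Fin k => markov_aux (fun p => ((S h ∩ L p).card : ℝ))
    (fun p => Nat.cast_nonneg _) _ (δ / 2) (card_part_aux L hdisj hcover (S h)) (by positivity)
  set B := Finset.univ.filter (fun p => ε / 2 * D < g p) with hBdef
  set A : Fin k → Finset (Fin (ℓ + 1)) := fun h =>
    Finset.univ.filter (fun p => δ / 2 * ((S h).card : ℝ) < ((S h ∩ L p).card : ℝ)) with hAdef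
  have hsub : (Finset.univ : Finset (Fin (ℓ + 1))) ⊆ Finset.univ.biUnion A ∪ B := by
    intro p _
    rw [Finset.mem_union, Finset.mem_biUnion]
    by_cases hp : ∀ h : Fin k, ((S h ∩ L p).card : ℝ) ≤ (δ / 2) * (S h).card
    · right
      exact Finset.mem_filter.mpr ⟨Finset.mem_univ _, hcon p hp⟩
    · left
      push Not at hp
      obtain ⟨h, hh⟩ := hp
      exact ⟨h, Finset.mem_univ _, Finset.mem_filter.mpr ⟨Finset.mem_univ _, hh⟩⟩
  have hc : ℓ + 1 ≤ (∑ h, (A h).card) + B.card := by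
    have h1 := Finset.card_le_card hsub
    rw [Finset.card_univ, Fintype.card_fin] at h1
    exact h1.trans ((Finset.card_union_le _ _).trans
      (Nat.add_le_add_right Finset.card_biUnion_le _))
  have hc' : (ℓ : ℝ) + 1 ≤ (∑ h, ((A h).card : ℝ)) + B.card := by exact_mod_cast hc
  have hs : ∑ h, ((A h).card : ℝ) ≤ ∑ _h : Fin k, 1 / (δ / 2) :=
    Finset.sum_le_sum (fun h _ => (hA h).le)
  rw [Finset.sum_const, Finset.card_univ, Fintype.card_fin, nsmul_eq_mul] at hs
  have e1 : (k : ℝ) * (1 / (δ / 2)) = 2 * k / δ := by field_simp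
  have e2 : 1 / (ε / 2) = 2 / ε := by field_simp
  rw [e1] at hs
  rw [e2] at hB
  linarith
end

section
/- Let V be a finite set, let ℓ ≥ 1 be an integer, and let L^0, …, L^ℓ be pairwise disjoint subsets of V whose union is V. Let δ, ε ∈ (0,1), let k ≥ 1 be an integer, and let S_1, …, S_k be subsets of V. If ℓ + 1 ≥ 2k² + 2k/δ + 2/ε, then there exists an index p ∈ {0, …, ℓ} such that simultaneously: (i) |S_h ∩ L^p| ≤ (δ/2)·|S_h| for every h ∈ {1,…,k}; (ii) ∑_{i≠j} |(S_i ∩ L^p) Δ (S_j ∩ L^p)| ≤ (ε/2)·∑_{i≠j} |S_i Δ S_j| (sums over ordered pairs i ≠ j); and (iii) |(S_i ∩ L^p) Δ (S_j ∩ L^p)| ≤ (1/2)·|S_i Δ S_j| for every pair i ≠ j. -/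
open Finset

theorem bad_card_lt {n : ℕ} (f : Fin n → ℝ) (T c : ℝ) (hf : ∀ p, 0 ≤ f p)
    (hT : ∑ p, f p = T) (hc : 0 < c) :
    ((Finset.univ.filter (fun p => c * T < f p)).card : ℝ) < 1 / c := by
  rw [lt_div_iff₀ hc]
  rcases (Finset.univ.filter (fun p => c * T < f p)).eq_empty_or_nonempty with h | h
  · rw [h]; simp
  · have h1 : ∑ p ∈ Finset.univ.filter (fun p => c * T < f p), c * T
        < ∑ p ∈ Finset.univ.filter (fun p => c * T < f p), f p :=
      Finset.sum_lt_sum_of_nonempty h (fun p hp => (Finset.mem_filter.mp hp).2)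
    have h2 : ∑ p ∈ Finset.univ.filter (fun p => c * T < f p), f p ≤ ∑ p, f p :=
      Finset.sum_le_sum_of_subset_of_nonneg (Finset.filter_subset _ _) (fun p _ _ => hf p)
    have h3 : 0 ≤ T := hT ▸ Finset.sum_nonneg (fun p _ => hf p)
    rw [Finset.sum_const, nsmul_eq_mul] at h1
    by_contra h4
    push Not at h4
    nlinarith [mul_le_mul_of_nonneg_right h4 h3]

theorem sum_card_inter {V : Type*} [Fintype V] [DecidableEq V] {n : ℕ}
    (L : Fin n → Finset V)
    (hdisj : ∀ p q : Fin n, p ≠ q → Disjoint (L p) (L q))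
    (hcover : Finset.univ.biUnion L = (Finset.univ : Finset V)) (A : Finset V) :
    ∑ p, ((A ∩ L p).card : ℝ) = A.card := by
  have h : A = Finset.univ.biUnion (fun p => A ∩ L p) := by
    rw [← Finset.inter_biUnion, hcover, Finset.inter_univ]
  conv_rhs => rw [h]
  rw [Finset.card_biUnion]
  · push_cast; rfl
  · intro p _ q _ hpq
    exact (hdisj p q hpq).mono Finset.inter_subset_right Finset.inter_subset_right

/-- Strengthened marginal strata lemma: if `ℓ + 1 ≥ 2k² + 2k/δ + 2/ε`, some part `L p`
of the partition additionally satisfies, for every pair `i ≠ j`, that it carries at most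
half of the symmetric difference `S i Δ S j`. -/
theorem marginal_strata_strong {V : Type*} [Fintype V] [DecidableEq V]
    (ℓ : ℕ) (hℓ : 1 ≤ ℓ)
    (L : Fin (ℓ + 1) → Finset V)
    (hdisj : ∀ p q : Fin (ℓ + 1), p ≠ q → Disjoint (L p) (L q))
    (hcover : Finset.univ.biUnion L = (Finset.univ : Finset V))
    (δ ε : ℝ) (hδ0 : 0 < δ) (hδ1 : δ < 1) (hε0 : 0 < ε) (hε1 : ε < 1)
    (k : ℕ) (hk : 1 ≤ k)
    (S : Fin k → Finset V)
    (hbound : 2 * (k : ℝ) ^ 2 + 2 * k / δ + 2 / ε ≤ ((ℓ : ℝ) + 1)) :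
    ∃ p : Fin (ℓ + 1),
      (∀ h : Fin k, ((S h ∩ L p).card : ℝ) ≤ (δ / 2) * (S h).card) ∧
      ((∑ ij ∈ (Finset.univ : Finset (Fin k)).offDiag,
          ((symmDiff (S ij.1 ∩ L p) (S ij.2 ∩ L p)).card : ℝ))
        ≤ (ε / 2) * ∑ ij ∈ (Finset.univ : Finset (Fin k)).offDiag,
            ((symmDiff (S ij.1) (S ij.2)).card : ℝ)) ∧
      (∀ i j : Fin k, i ≠ j →
        ((symmDiff (S i ∩ L p) (S j ∩ L p)).card : ℝ)
          ≤ (1 / 2) * ((symmDiff (S i) (S j)).card : ℝ)) := by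
  have hsd : ∀ i j p, symmDiff (S i ∩ L p) (S j ∩ L p) = symmDiff (S i) (S j) ∩ L p := by
    intro i j p
    exact (inf_symmDiff_distrib_right (S i) (S j) (L p)).symm
  simp only [hsd]
  have hsum := sum_card_inter L hdisj hcover
  set D := (Finset.univ : Finset (Fin k)).offDiag with hD
  let B1 : Fin k → Finset (Fin (ℓ + 1)) := fun h => Finset.univ.filter
    (fun p => (δ / 2) * ((S h).card : ℝ) < ((S h ∩ L p).card : ℝ))
  let B2 : Finset (Fin (ℓ + 1)) := Finset.univ.filter
    (fun p => (ε / 2) * ∑ ij ∈ D, ((symmDiff (S ij.1) (S ij.2)).card : ℝ)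
      < ∑ ij ∈ D, ((symmDiff (S ij.1) (S ij.2) ∩ L p).card : ℝ))
  let B3 : Fin k × Fin k → Finset (Fin (ℓ + 1)) := fun ij => Finset.univ.filter
    (fun p => (1 / 2) * ((symmDiff (S ij.1) (S ij.2)).card : ℝ)
      < ((symmDiff (S ij.1) (S ij.2) ∩ L p).card : ℝ))
  have h1 : ∀ h, ((B1 h).card : ℝ) ≤ 2 / δ := fun h => by
    have := bad_card_lt (fun p => ((S h ∩ L p).card : ℝ)) _ (δ / 2)
      (fun p => Nat.cast_nonneg _) (hsum _) (by positivity)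
    rw [one_div_div] at this
    exact this.le
  have h2 : (B2.card : ℝ) < 2 / ε := by
    have := bad_card_lt (fun p => ∑ ij ∈ D, ((symmDiff (S ij.1) (S ij.2) ∩ L p).card : ℝ))
      (∑ ij ∈ D, ((symmDiff (S ij.1) (S ij.2)).card : ℝ)) (ε / 2)
      (fun p => Finset.sum_nonneg fun _ _ => Nat.cast_nonneg _)
      (by rw [Finset.sum_comm]; exact Finset.sum_congr rfl fun _ _ => hsum _) (by positivity)
    rw [one_div_div] at this
    exact this
  have h3 : ∀ ij, ((B3 ij).card : ℝ) ≤ 2 := fun ij => by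
    have := bad_card_lt (fun p => ((symmDiff (S ij.1) (S ij.2) ∩ L p).card : ℝ)) _ (1 / 2)
      (fun p => Nat.cast_nonneg _) (hsum _) (by positivity)
    rw [one_div_one_div] at this
    exact this.le
  by_contra hcon
  have hall : (Finset.univ : Finset (Fin (ℓ + 1))) ⊆
      Finset.univ.biUnion B1 ∪ B2 ∪ Finset.univ.biUnion B3 := by
    intro p _
    by_contra hp
    simp only [Finset.mem_union, Finset.mem_biUnion, Finset.mem_univ, true_and, not_or,
      not_exists, B1, B2, B3, Finset.mem_filter, not_lt] at hp
    exact hcon ⟨p, hp.1.1, hp.1.2, fun i j _ => hp.2 (i, j)⟩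
  have hcard := Finset.card_le_card hall
  have hle : ℓ + 1 ≤ ∑ h, (B1 h).card + B2.card + ∑ ij, (B3 ij).card := by
    rw [Finset.card_univ, Fintype.card_fin] at hcard
    have a1 := Finset.card_union_le (Finset.univ.biUnion B1 ∪ B2) (Finset.univ.biUnion B3)
    have a2 := Finset.card_union_le (Finset.univ.biUnion B1) B2
    have a3 : (Finset.univ.biUnion B1).card ≤ ∑ h, (B1 h).card := Finset.card_biUnion_le
    have a4 : (Finset.univ.biUnion B3).card ≤ ∑ h, (B3 h).card := Finset.card_biUnion_le
    omega
  have hleR : (ℓ : ℝ) + 1 ≤ ∑ h, ((B1 h).card : ℝ) + B2.card + ∑ ij, ((B3 ij).card : ℝ) := by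
    exact_mod_cast hle
  have s1 : ∑ h, ((B1 h).card : ℝ) ≤ 2 * k / δ := by
    refine (Finset.sum_le_sum fun h _ => h1 h).trans (le_of_eq ?_)
    simp
    ring
  have s3 : ∑ ij, ((B3 ij).card : ℝ) ≤ 2 * (k : ℝ) ^ 2 := by
    refine (Finset.sum_le_sum fun h _ => h3 h).trans (le_of_eq ?_)
    simp
    ring
  linarith
end

section
/- Let n ≥ 1 be an integer, let u_1, …, u_n be strictly positive real profits for items 1, …, n, and for a set X ⊆ {1,…,n} write u(X) = ∑_{h∈X} u_h. Let c, δ ∈ (0,1), let S ⊆ {1,…,n} be nonempty, define Ũ = ⌈((1−δ)/δ)·n⌉ and ũ_h = ⌊((Ũ + n)/(c·u(S)))·u_h⌋ for each h, and write ũ(X) = ∑_{h∈X} ũ_h. Then every X ⊆ {1,…,n} with u(X) ≥ c·u(S) satisfies ũ(X) ≥ Ũ. -/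
open Finset

/-- Profit scaling and rounding, first direction: every `c`-optimal solution `X`
(one with `u(X) ≥ c·u(S)`) satisfies `ũ(X) ≥ Ũ` for the scaled-and-rounded profits
`ũ h = ⌊((Ũ + n)/(c·u(S)))·u h⌋`, where `Ũ = ⌈((1-δ)/δ)·n⌉`. -/
theorem knapsack_scaling_first (n : ℕ) (hn : 1 ≤ n)
    (u : Fin n → ℝ) (hu : ∀ h, 0 < u h)
    (c δ : ℝ) (hc0 : 0 < c) (hc1 : c < 1) (hδ0 : 0 < δ) (hδ1 : δ < 1)
    (S : Finset (Fin n)) (hS : S.Nonempty)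
    (U' : ℤ) (hU' : U' = ⌈((1 - δ) / δ) * (n : ℝ)⌉)
    (u' : Fin n → ℤ)
    (hu' : ∀ h, u' h = ⌊(((U' : ℝ) + n) / (c * ∑ i ∈ S, u i)) * u h⌋)
    (X : Finset (Fin n)) (hX : c * ∑ i ∈ S, u i ≤ ∑ i ∈ X, u i) :
    U' ≤ ∑ i ∈ X, u' i := by
  have hD : 0 < c * ∑ i ∈ S, u i := mul_pos hc0 (Finset.sum_pos (fun i _ => hu i) hS)
  have hU0 : (0 : ℤ) ≤ U' := by
    rw [hU']
    apply Int.ceil_nonneg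
    have : 0 ≤ 1 - δ := by linarith
    positivity
  have hU0r : (0 : ℝ) ≤ (U' : ℝ) := by exact_mod_cast hU0
  set D := c * ∑ i ∈ S, u i with hDdef
  have hcard : (X.card : ℝ) ≤ n := by
    have h := Finset.card_le_univ X
    rw [Fintype.card_fin] at h
    exact_mod_cast h
  have h1 : ∑ i ∈ X, ((((U' : ℝ) + n) / D) * u i - 1) ≤ ∑ i ∈ X, (u' i : ℝ) := by
    apply Finset.sum_le_sum
    intro i _
    rw [hu' i]
    exact (Int.sub_one_lt_floor _).le
  rw [Finset.sum_sub_distrib, ← Finset.mul_sum, Finset.sum_const, nsmul_eq_mul, mul_one] at h1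
  have h2 : (U' : ℝ) + n ≤ (((U' : ℝ) + n) / D) * ∑ i ∈ X, u i := by
    calc (U' : ℝ) + n = (((U' : ℝ) + n) / D) * D := by field_simp
      _ ≤ _ := mul_le_mul_of_nonneg_left hX (by positivity)
  have h3 : (U' : ℝ) ≤ ∑ i ∈ X, (u' i : ℝ) := by linarith
  exact_mod_cast h3
end

section
/- Let n ≥ 1 be an integer, let u_1, …, u_n be strictly positive real profits for items 1, …, n, and for a set X ⊆ {1,…,n} write u(X) = ∑_{h∈X} u_h. Let c, δ ∈ (0,1), let S ⊆ {1,…,n} be nonempty, define Ũ = ⌈((1−δ)/δ)·n⌉ and ũ_h = ⌊((Ũ + n)/(c·u(S)))·u_h⌋ for each h, and write ũ(X) = ∑_{h∈X} ũ_h. Then every Y ⊆ {1,…,n} with ũ(Y) ≥ Ũ satisfies u(Y) ≥ c·(1−δ)·u(S). -/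
open Finset

/-- Profit scaling and rounding, second direction: every solution `Y` meeting the scaled
threshold, i.e. `ũ(Y) ≥ Ũ` for the scaled-and-rounded profits
`ũ h = ⌊((Ũ + n)/(c·u(S)))·u h⌋` with `Ũ = ⌈((1-δ)/δ)·n⌉`,
has original profit `u(Y) ≥ c·(1-δ)·u(S)`. -/
theorem knapsack_scaling_second (n : ℕ) (hn : 1 ≤ n)
    (u : Fin n → ℝ) (hu : ∀ h, 0 < u h)
    (c δ : ℝ) (hc0 : 0 < c) (hc1 : c < 1) (hδ0 : 0 < δ) (hδ1 : δ < 1)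
    (S : Finset (Fin n)) (hS : S.Nonempty)
    (U' : ℤ) (hU' : U' = ⌈((1 - δ) / δ) * (n : ℝ)⌉)
    (u' : Fin n → ℤ)
    (hu' : ∀ h, u' h = ⌊(((U' : ℝ) + n) / (c * ∑ i ∈ S, u i)) * u h⌋)
    (Y : Finset (Fin n)) (hY : U' ≤ ∑ i ∈ Y, u' i) :
    c * (1 - δ) * ∑ i ∈ S, u i ≤ ∑ i ∈ Y, u i := by
  have hA : 0 < ∑ i ∈ S, u i := Finset.sum_pos (fun i _ => hu i) hS
  have hn' : (0 : ℝ) < n := by exact_mod_cast hn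
  have h1 : ((1 - δ) / δ) * (n : ℝ) ≤ (U' : ℝ) := by
    rw [hU']
    exact Int.le_ceil _
  have h2 : (1 - δ) * (n : ℝ) ≤ U' * δ := by
    rw [div_mul_eq_mul_div, div_le_iff₀ hδ0] at h1
    exact h1
  have hU0 : (0 : ℝ) ≤ U' := by
    refine le_trans ?_ h1
    have : 0 < 1 - δ := by linarith
    positivity
  have hW : (0 : ℝ) < (U' : ℝ) + n := by linarith
  have h3 : (U' : ℝ) ≤ (((U' : ℝ) + n) / (c * ∑ i ∈ S, u i)) * ∑ i ∈ Y, u i := by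
    calc (U' : ℝ) ≤ ((∑ i ∈ Y, u' i : ℤ) : ℝ) := by exact_mod_cast hY
      _ = ∑ i ∈ Y, (u' i : ℝ) := by push_cast; rfl
      _ ≤ ∑ i ∈ Y, (((U' : ℝ) + n) / (c * ∑ i ∈ S, u i)) * u i := by
          refine Finset.sum_le_sum fun i _ => ?_
          rw [hu' i]
          exact Int.floor_le _
      _ = _ := (Finset.mul_sum _ _ _).symm
  have hcA : 0 < c * ∑ i ∈ S, u i := mul_pos hc0 hA
  rw [div_mul_eq_mul_div, le_div_iff₀ hcA] at h3
  have h4 : (1 - δ) * ((U' : ℝ) + n) ≤ U' := by linarith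
  have h5 := mul_le_mul_of_nonneg_right h4 hcA.le
  refine le_of_mul_le_mul_left ?_ hW
  linarith
end

section
/- Let n ≥ 1 be an integer and consider the knapsack instance I_n with 2n items indexed by pairs (i,b), i ∈ {1,…,n}, b ∈ {0,1}, where item (i,b) has weight 2^i and value 4^i, and the knapsack capacity is 2^{n+1} − 2. Then: (a) every set T of items with total weight at most 2^{n+1} − 2 has total value at most ∑_{i=1}^n 4^i; and (b) a set T of items with total weight at most 2^{n+1} − 2 has total value exactly ∑_{i=1}^n 4^i if and only if, for every i ∈ {1,…,n}, T contains exactly one of the two items (i,0), (i,1). In particular, the optimal value of I_n equals ∑_{i=1}^n 4^i, and every optimal packing has total weight exactly 2^{n+1} − 2. -/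
open Finset

/-- The weight of a set of items of the knapsack instance `I n`: item `(i, b)` (with
`i : Fin n` representing item index `i+1 ∈ {1,…,n}`) has weight `2^(i+1)`. -/
def knapWeight (n : ℕ) (T : Finset (Fin n × Bool)) : ℕ :=
  ∑ x ∈ T, 2 ^ (x.1.1 + 1)

/-- The value of a set of items of the knapsack instance `I n`: item `(i, b)` has value
`4^(i+1)`. -/
def knapValue (n : ℕ) (T : Finset (Fin n × Bool)) : ℕ :=
  ∑ x ∈ T, 4 ^ (x.1.1 + 1)

theorem aux_core (c : ℕ → ℕ) (n : ℕ) (hc : ∀ i < n, c i ≤ 2)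
    (hw : ∑ i ∈ Finset.range n, c i * 2 ^ (i + 1) + 2 ≤ 2 ^ (n + 1)) :
    ∑ i ∈ Finset.range n, c i * 4 ^ (i + 1) ≤ ∑ i ∈ Finset.range n, 4 ^ (i + 1) ∧
    (∑ i ∈ Finset.range n, c i * 4 ^ (i + 1) = ∑ i ∈ Finset.range n, 4 ^ (i + 1) →
      ∀ i < n, c i = 1) := by
  induction n with
  | zero => simp
  | succ n ih =>
    have hc' : ∀ i < n, c i ≤ 2 := fun i hi => hc i (by omega)
    have h2 := hc n (by omega)
    rw [Finset.sum_range_succ] at hw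
    simp only [Finset.sum_range_succ (n := n)]
    have hp : 2 ^ (n + 1 + 1) = 2 * 2 ^ (n + 1) := by ring
    rcases (by omega : c n = 0 ∨ c n = 1 ∨ c n = 2) with h | h | h
    · have hb : ∑ i ∈ Finset.range n, c i * 4 ^ (i + 1)
          ≤ 2 * ∑ i ∈ Finset.range n, 4 ^ (i + 1) := by
        rw [Finset.mul_sum]
        apply Finset.sum_le_sum
        intro i hi
        exact Nat.mul_le_mul_right _ (hc' i (Finset.mem_range.1 hi))
      have hg : ∀ m : ℕ, ∑ i ∈ Finset.range m, 4 ^ (i + 1) < 4 ^ (m + 1) := by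
        intro m
        induction m with
        | zero => simp
        | succ m ihm =>
          rw [Finset.sum_range_succ, pow_succ 4 (m + 1)]
          omega
      have := hg n
      rw [h]
      constructor
      · omega
      · intro; omega
    · rw [h] at hw ⊢
      obtain ⟨h3, h4⟩ := ih hc' (by omega)
      refine ⟨by omega, fun he i hi => ?_⟩
      rcases Nat.lt_succ_iff_lt_or_eq.1 hi with h5 | h5
      · exact h4 (by omega) i h5
      · rw [h5, h]
    · rw [h] at hw
      omega

def auxC (n : ℕ) (T : Finset (Fin n × Bool)) (i : ℕ) : ℕ :=
  if h : i < n then (if ((⟨i, h⟩ : Fin n), true) ∈ T then 1 else 0) +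
    (if ((⟨i, h⟩ : Fin n), false) ∈ T then 1 else 0) else 0

theorem aux_sum (n : ℕ) (T : Finset (Fin n × Bool)) (f : ℕ → ℕ) :
    ∑ x ∈ T, f x.1.1 = ∑ i ∈ Finset.range n, auxC n T i * f i := by
  rw [← Fin.sum_univ_eq_sum_range (fun i => auxC n T i * f i) n]
  have : ∑ x ∈ T, f x.1.1 = ∑ x : Fin n × Bool, if x ∈ T then f x.1.1 else 0 := by
    simp
  rw [this, Fintype.sum_prod_type]
  apply Finset.sum_congr rfl
  intro i _
  simp [auxC, add_mul]

theorem aux_xor (n : ℕ) (T : Finset (Fin n × Bool)) :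
    (∀ i : Fin n, Xor' ((i, false) ∈ T) ((i, true) ∈ T)) ↔ ∀ i < n, auxC n T i = 1 := by
  constructor
  · intro h i hi
    have := h ⟨i, hi⟩
    unfold auxC
    rw [dif_pos hi]
    rcases this with ⟨h1, h2⟩ | ⟨h1, h2⟩ <;> simp [h1, h2]
  · rintro h ⟨i, hi⟩
    have := h i hi
    unfold auxC at this
    rw [dif_pos hi] at this
    by_cases h1 : ((⟨i, hi⟩ : Fin n), true) ∈ T <;>
    by_cases h2 : ((⟨i, hi⟩ : Fin n), false) ∈ T <;> simp_all [Xor']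

theorem aux_le (n : ℕ) (T : Finset (Fin n × Bool)) (i : ℕ) : auxC n T i ≤ 2 := by
  unfold auxC
  split_ifs <;> simp

theorem aux_one (n : ℕ) (T : Finset (Fin n × Bool)) (f : ℕ → ℕ)
    (h : ∀ i < n, auxC n T i = 1) :
    ∑ x ∈ T, f x.1.1 = ∑ i ∈ Finset.range n, f i := by
  rw [aux_sum]
  apply Finset.sum_congr rfl
  intro i hi
  rw [h i (Finset.mem_range.1 hi), one_mul]

theorem aux_geom (n : ℕ) : ∑ i ∈ Finset.range n, 2 ^ (i + 1) = 2 ^ (n + 1) - 2 := by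
  induction n with
  | zero => simp
  | succ n ih =>
    rw [Finset.sum_range_succ, ih, pow_succ 2 (n + 1), pow_succ 2 n]
    have : 0 < 2 ^ n := by positivity
    omega

theorem aux_main (n : ℕ) (T : Finset (Fin n × Bool))
    (hw : knapWeight n T ≤ 2 ^ (n + 1) - 2) :
    knapValue n T ≤ ∑ i ∈ Finset.range n, 4 ^ (i + 1) ∧
    (knapValue n T = ∑ i ∈ Finset.range n, 4 ^ (i + 1) → ∀ i < n, auxC n T i = 1) := by
  unfold knapWeight at hw
  unfold knapValue
  rw [aux_sum n T (fun i => 2 ^ (i + 1))] at hw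
  rw [aux_sum n T (fun i => 4 ^ (i + 1))]
  apply aux_core _ _ (fun i _ => aux_le n T i)
  have : 0 < 2 ^ n := by positivity
  have := pow_succ 2 n
  omega

/-- Structure of optimal packings of the instance `I n` (capacity `2^(n+1) - 2`):
(a) every packing has value at most `∑_{i=1}^n 4^i`;
(b) a packing has value exactly `∑_{i=1}^n 4^i` iff it contains exactly one item of each
pair `{(i, false), (i, true)}`;
moreover the optimal value `∑_{i=1}^n 4^i` is attained, and every optimal packing has
total weight exactly `2^(n+1) - 2`. -/
theorem knapsack_instance_structure (n : ℕ) (hn : 1 ≤ n) :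
    (∀ T : Finset (Fin n × Bool), knapWeight n T ≤ 2 ^ (n + 1) - 2 →
        knapValue n T ≤ ∑ i ∈ Finset.range n, 4 ^ (i + 1)) ∧
    (∀ T : Finset (Fin n × Bool), knapWeight n T ≤ 2 ^ (n + 1) - 2 →
        (knapValue n T = ∑ i ∈ Finset.range n, 4 ^ (i + 1) ↔
          ∀ i : Fin n, Xor' ((i, false) ∈ T) ((i, true) ∈ T))) ∧
    (∃ T : Finset (Fin n × Bool), knapWeight n T ≤ 2 ^ (n + 1) - 2 ∧
        knapValue n T = ∑ i ∈ Finset.range n, 4 ^ (i + 1)) ∧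
    (∀ T : Finset (Fin n × Bool), knapWeight n T ≤ 2 ^ (n + 1) - 2 →
        knapValue n T = ∑ i ∈ Finset.range n, 4 ^ (i + 1) →
        knapWeight n T = 2 ^ (n + 1) - 2) := by
  refine ⟨fun T hT => (aux_main n T hT).1, fun T hT => ?_, ?_, fun T hT hv => ?_⟩
  · rw [aux_xor]
    exact ⟨(aux_main n T hT).2, fun h => aux_one n T (fun i => 4 ^ (i + 1)) h⟩
  · have h : ∀ i < n, auxC n (Finset.univ.filter (fun x => x.2 = true)) i = 1 := by
      intro i hi
      simp [auxC, hi]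
    refine ⟨Finset.univ.filter (fun x => x.2 = true), ?_, ?_⟩
    · exact ((aux_one n _ (fun i => 2 ^ (i + 1)) h).trans (aux_geom n)).le
    · exact aux_one n _ (fun i => 4 ^ (i + 1)) h
  · exact (aux_one n T (fun i => 2 ^ (i + 1)) ((aux_main n T hT).2 hv)).trans (aux_geom n)
end

section
/- Let n ≥ 1 be an integer and consider the knapsack instance I_n (items (i,b) for i ∈ {1,…,n}, b ∈ {0,1}, with weight 2^i and value 4^i, capacity 2^{n+1} − 2). The map sending an optimal packing T to the binary word x_T ∈ {0,1}^n defined by x_T(i) = b, where (i,b) is the unique item of the pair {(i,0),(i,1)} contained in T, is a bijection between the set of optimal packings of I_n and {0,1}^n. Moreover, for any two optimal packings T, T', the symmetric difference satisfies |T Δ T'| = 2·d_H(x_T, x_{T'}), where d_H denotes Hamming distance on {0,1}^n. -/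
open Finset

/-- An optimal packing of the instance `I n`: a set of items of weight at most the
capacity `2^(n+1) - 2` and of maximum value among all such sets. -/
def IsOptimalPacking (n : ℕ) (T : Finset (Fin n × Bool)) : Prop :=
  knapWeight n T ≤ 2 ^ (n + 1) - 2 ∧
  ∀ T' : Finset (Fin n × Bool), knapWeight n T' ≤ 2 ^ (n + 1) - 2 →
    knapValue n T' ≤ knapValue n T

def kcnt (n : ℕ) (T : Finset (Fin n × Bool)) (i : Fin n) : ℕ :=
  (if (i, true) ∈ T then 1 else 0) + (if (i, false) ∈ T then 1 else 0)

lemma ksum (n : ℕ) (T : Finset (Fin n × Bool)) (f : Fin n → ℕ) :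
    ∑ x ∈ T, f x.1 = ∑ i, kcnt n T i * f i := by
  have h : ∑ x ∈ T, f x.1 = ∑ x : Fin n × Bool, if x ∈ T then f x.1 else 0 := by
    simp
  rw [h, Fintype.sum_prod_type]
  refine Finset.sum_congr rfl fun i _ => ?_
  rw [Fintype.sum_bool, kcnt]
  split_ifs <;> ring

lemma sum4 (n : ℕ) : 3 * (∑ i : Fin n, 4 ^ (i.1 + 1)) + 4 = 4 ^ (n + 1) := by
  induction n with
  | zero => simp
  | succ n ih =>
    rw [Fin.sum_univ_castSucc]
    simp only [Fin.val_castSucc, Fin.val_last]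
    rw [pow_succ 4 (n + 1)]
    omega

lemma sum2 (n : ℕ) : (∑ i : Fin n, 2 ^ (i.1 + 1)) + 2 = 2 ^ (n + 1) := by
  induction n with
  | zero => simp
  | succ n ih =>
    rw [Fin.sum_univ_castSucc]
    simp only [Fin.val_castSucc, Fin.val_last]
    rw [pow_succ 2 (n + 1)]
    omega

lemma kmain (n : ℕ) (c : Fin n → ℕ) (hc : ∀ i, c i ≤ 2)
    (hw : ∑ i, c i * 2 ^ (i.1 + 1) ≤ 2 ^ (n + 1) - 2) :
    ∑ i, c i * 4 ^ (i.1 + 1) ≤ ∑ i : Fin n, 4 ^ (i.1 + 1) ∧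
    (∑ i : Fin n, 4 ^ (i.1 + 1) ≤ ∑ i, c i * 4 ^ (i.1 + 1) → ∀ i, c i = 1) := by
  induction n with
  | zero => exact ⟨by simp, fun _ i => i.elim0⟩
  | succ n ih =>
    have hs := sum4 n
    have hp : 0 < 2 ^ (n + 1) := by positivity
    rw [Fin.sum_univ_castSucc] at hw
    rw [Fin.sum_univ_castSucc, Fin.sum_univ_castSucc]
    simp only [Fin.val_castSucc, Fin.val_last] at hw ⊢
    rw [pow_succ 2 (n + 1)] at hw
    have hl := hc (Fin.last n)
    have ih' := ih (fun i => c i.castSucc) (fun i => hc _)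
    have hb : ∑ i : Fin n, c i.castSucc * 4 ^ (i.1 + 1) ≤
        2 * ∑ i : Fin n, 4 ^ (i.1 + 1) := by
      rw [Finset.mul_sum]
      exact Finset.sum_le_sum fun i _ => Nat.mul_le_mul_right _ (hc _)
    rcases (by omega : c (Fin.last n) = 0 ∨ c (Fin.last n) = 1 ∨ c (Fin.last n) = 2)
      with h | h | h
    · rw [h]
      constructor
      · omega
      · intro h'
        exfalso
        omega
    · rw [h] at hw ⊢
      obtain ⟨h1, h2⟩ := ih' (by omega)
      refine ⟨by omega, fun h' i => ?_⟩
      have h3 := h2 (by omega)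
      exact Fin.lastCases h h3 i
    · rw [h] at hw
      omega

lemma kcnt_le (n : ℕ) (T : Finset (Fin n × Bool)) (i : Fin n) : kcnt n T i ≤ 2 := by
  unfold kcnt
  split_ifs <;> omega

lemma kw (n : ℕ) (T : Finset (Fin n × Bool)) :
    knapWeight n T = ∑ i, kcnt n T i * 2 ^ (i.1 + 1) := ksum n T fun i => 2 ^ (i.1 + 1)

lemma kv (n : ℕ) (T : Finset (Fin n × Bool)) :
    knapValue n T = ∑ i, kcnt n T i * 4 ^ (i.1 + 1) := ksum n T fun i => 4 ^ (i.1 + 1)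

def kgraph (n : ℕ) (x : Fin n → Bool) : Finset (Fin n × Bool) :=
  Finset.univ.filter fun p => p.2 = x p.1

lemma kgraph_cnt (n : ℕ) (x : Fin n → Bool) (i : Fin n) : kcnt n (kgraph n x) i = 1 := by
  cases h : x i <;> simp [kcnt, kgraph, h]

lemma opt_of_cnt (n : ℕ) (T : Finset (Fin n × Bool)) (h : ∀ i, kcnt n T i = 1) :
    IsOptimalPacking n T := by
  refine ⟨?_, fun T' hT' => ?_⟩
  · have := sum2 n
    rw [kw]
    simp only [h, one_mul]
    omega
  · rw [kw] at hT'
    rw [kv, kv n T]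
    simp only [h, one_mul]
    exact (kmain n _ (kcnt_le n T') hT').1

lemma cnt_of_opt (n : ℕ) (T : Finset (Fin n × Bool)) (h : IsOptimalPacking n T) :
    ∀ i, kcnt n T i = 1 := by
  obtain ⟨h1, h2⟩ := h
  have h3 := h2 _ (opt_of_cnt n _ (kgraph_cnt n fun _ => true)).1
  rw [kw] at h1
  rw [kv, kv n T] at h3
  simp only [kgraph_cnt, one_mul] at h3
  exact (kmain n _ (kcnt_le n T) h1).2 h3

lemma mem_of_opt (n : ℕ) (T : Finset (Fin n × Bool)) (h : IsOptimalPacking n T)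
    (i : Fin n) (b : Bool) : (i, b) ∈ T ↔ b = decide ((i, true) ∈ T) := by
  have := cnt_of_opt n T h i
  unfold kcnt at this
  by_cases h1 : (i, true) ∈ T <;> by_cases h2 : (i, false) ∈ T <;>
    cases b <;> simp_all

/-- The map sending an optimal packing `T` of `I n` to the binary word `x_T ∈ {0,1}^n`,
where `x_T i` is the unique `b` with `(i, b) ∈ T`, is a bijection between optimal packings
and binary words of length `n`; moreover `|T Δ T'| = 2·d_H(x_T, x_{T'})`. -/
theorem optimal_packings_equiv_words (n : ℕ) (hn : 1 ≤ n) :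
    ∃ x : {T : Finset (Fin n × Bool) // IsOptimalPacking n T} → (Fin n → Bool),
      (∀ T : {T : Finset (Fin n × Bool) // IsOptimalPacking n T},
        ∀ i : Fin n, (i, x T i) ∈ T.1) ∧
      Function.Bijective x ∧
      (∀ T T' : {T : Finset (Fin n × Bool) // IsOptimalPacking n T},
        (symmDiff T.1 T'.1).card = 2 * hammingDist (x T) (x T')) := by
  refine ⟨fun T i => decide ((i, true) ∈ T.1), ?_, ⟨?_, ?_⟩, ?_⟩
  · intro T i
    exact (mem_of_opt n T.1 T.2 i _).2 rfl
  · intro T T' h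
    apply Subtype.ext
    ext ⟨i, b⟩
    rw [mem_of_opt n T.1 T.2, mem_of_opt n T'.1 T'.2]
    have := congrFun h i
    simp only at this
    rw [this]
  · intro x
    refine ⟨⟨kgraph n x, opt_of_cnt n _ (kgraph_cnt n x)⟩, ?_⟩
    funext i
    cases h : x i <;> simp [kgraph, h]
  · intro T T'
    rw [Finset.card_eq_sum_ones, ksum n _ (fun _ => 1), hammingDist,
      Finset.card_filter, Finset.mul_sum]
    refine Finset.sum_congr rfl fun i _ => ?_
    have a1 := mem_of_opt n T.1 T.2 i false
    have a2 := mem_of_opt n T'.1 T'.2 i false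
    unfold kcnt
    simp only [Finset.mem_symmDiff, a1, a2]
    by_cases h1 : (i, true) ∈ T.1 <;> by_cases h2 : (i, true) ∈ T'.1 <;> simp [h1, h2]
end

section
/- Let n, d, m ≥ 1 be integers and consider the knapsack instance I_n (items (i,b) for i ∈ {1,…,n}, b ∈ {0,1}, with weight 2^i and value 4^i, capacity 2^{n+1} − 2). Then there exist m pairwise distinct optimal packings T_1, …, T_m of I_n with |T_a Δ T_b| ≥ 2d for all a ≠ b if and only if A_2(n, d) ≥ m. -/
open Finset

/-- `A₂ n d`: the maximum number of binary codewords of length `n` in which every two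
distinct codewords have Hamming distance at least `d`. -/
noncomputable def A2 (n d : ℕ) : ℕ :=
  sSup {m | ∃ C : Finset (Fin n → Bool), C.card = m ∧
    ∀ x ∈ C, ∀ y ∈ C, x ≠ y → d ≤ hammingDist x y}

theorem aux_fin (n : ℕ) (c : Fin n → ℕ) (hc : ∀ i, c i ≤ 2)
    (hw : ∑ i, c i * 2 ^ (i.1 + 1) ≤ 2 ^ (n + 1) - 2) :
    3 * ∑ i, c i * 4 ^ (i.1 + 1) + 4 ≤ 4 ^ (n + 1) ∧
      (3 * ∑ i, c i * 4 ^ (i.1 + 1) + 4 = 4 ^ (n + 1) → ∀ i, c i = 1) := by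
  induction n with
  | zero => simp
  | succ n ih =>
    rw [Fin.sum_univ_castSucc] at hw ⊢
    simp only [Fin.val_castSucc, Fin.val_last] at hw ⊢
    have h2 : 2 ≤ 2 ^ (n + 1) := by
      have := Nat.one_le_two_pow (n := n)
      rw [pow_succ]; omega
    have e2 : 2 ^ (n + 1 + 1) = 2 * 2 ^ (n + 1) := by ring
    have e4 : 4 ^ (n + 1 + 1) = 4 * 4 ^ (n + 1) := by ring
    have h4 : 1 ≤ 4 ^ (n + 1) := Nat.one_le_pow _ _ (by norm_num)
    have hl := hc (Fin.last n)
    rw [e2] at hw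
    rw [e4]
    have hg : ∀ k : ℕ, 3 * ∑ i : Fin k, 4 ^ (i.1 + 1) + 4 = 4 ^ (k + 1) := by
      intro k
      induction k with
      | zero => simp
      | succ k ihk =>
        rw [Fin.sum_univ_castSucc]
        simp only [Fin.val_castSucc, Fin.val_last]
        rw [pow_succ 4 (k + 1)]; omega
    obtain h | h | h : c (Fin.last n) = 0 ∨ c (Fin.last n) = 1 ∨ c (Fin.last n) = 2 := by omega
    · have hb : ∑ i : Fin n, c i.castSucc * 4 ^ (i.1 + 1) ≤ 2 * ∑ i : Fin n, 4 ^ (i.1 + 1) := by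
        rw [Finset.mul_sum]
        exact Finset.sum_le_sum fun i _ => Nat.mul_le_mul_right _ (hc _)
      have := hg n
      rw [h]
      constructor
      · omega
      · intro h'; omega
    · rw [h] at hw ⊢
      obtain ⟨i1, i2⟩ := ih (fun i => c i.castSucc) (fun i => hc _) (by omega)
      refine ⟨by omega, fun h' => ?_⟩
      have := i2 (by omega)
      intro i
      refine Fin.lastCases h (fun j => this j) i
    · rw [h] at hw
      omega

def cnt {n : ℕ} (T : Finset (Fin n × Bool)) (i : Fin n) : ℕ :=
  (if (i, true) ∈ T then 1 else 0) + (if (i, false) ∈ T then 1 else 0)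

theorem sum_cnt {n : ℕ} (T : Finset (Fin n × Bool)) (f : Fin n → ℕ) :
    ∑ x ∈ T, f x.1 = ∑ i, cnt T i * f i := by
  have : ∑ x ∈ T, f x.1 = ∑ x, if x ∈ T then f x.1 else 0 := by
    simp
  rw [this, Fintype.sum_prod_type]
  refine Finset.sum_congr rfl fun i _ => ?_
  simp only [Fintype.sum_bool, cnt, add_mul, ite_mul, one_mul, zero_mul]

def pk {n : ℕ} (x : Fin n → Bool) : Finset (Fin n × Bool) :=
  Finset.univ.filter fun p => p.2 = x p.1

theorem cnt_pk {n : ℕ} (x : Fin n → Bool) (i : Fin n) : cnt (pk x) i = 1 := by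
  cases h : x i <;> simp [cnt, pk, h]

theorem weight_pk {n : ℕ} (x : Fin n → Bool) : knapWeight n (pk x) = 2 ^ (n + 1) - 2 := by
  rw [knapWeight, sum_cnt _ (fun i => 2 ^ (i.1 + 1))]
  simp only [cnt_pk, one_mul]
  have hg : ∀ k : ℕ, ∑ i : Fin k, 2 ^ (i.1 + 1) + 2 = 2 ^ (k + 1) := by
    intro k
    induction k with
    | zero => simp
    | succ k ihk =>
      rw [Fin.sum_univ_castSucc]
      simp only [Fin.val_castSucc, Fin.val_last]
      rw [pow_succ 2 (k + 1)]; omega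
  have := hg n
  omega

theorem value_pk {n : ℕ} (x : Fin n → Bool) : 3 * knapValue n (pk x) + 4 = 4 ^ (n + 1) := by
  rw [knapValue, sum_cnt _ (fun i => 4 ^ (i.1 + 1))]
  simp only [cnt_pk, one_mul]
  clear x
  induction n with
  | zero => simp
  | succ k ihk =>
    rw [Fin.sum_univ_castSucc]
    simp only [Fin.val_castSucc, Fin.val_last]
    rw [pow_succ 4 (k + 1)]; omega

theorem aux_T {n : ℕ} (T : Finset (Fin n × Bool)) (hw : knapWeight n T ≤ 2 ^ (n + 1) - 2) :
    3 * knapValue n T + 4 ≤ 4 ^ (n + 1) ∧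
      (3 * knapValue n T + 4 = 4 ^ (n + 1) → ∀ i, cnt T i = 1) := by
  rw [knapWeight, sum_cnt _ (fun i => 2 ^ (i.1 + 1))] at hw
  rw [knapValue, sum_cnt _ (fun i => 4 ^ (i.1 + 1))]
  refine aux_fin n (cnt T) (fun i => ?_) hw
  unfold cnt
  split_ifs <;> simp

theorem opt_pk {n : ℕ} (x : Fin n → Bool) : IsOptimalPacking n (pk x) := by
  refine ⟨(weight_pk x).le, fun T' h => ?_⟩
  have := (aux_T T' h).1
  have := value_pk x
  omega

theorem pk_of_opt {n : ℕ} (T : Finset (Fin n × Bool)) (h : IsOptimalPacking n T) :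
    ∃ x, T = pk x := by
  have h1 := aux_T T h.1
  have h2 := h.2 (pk fun _ => true) (weight_pk _).le
  have h3 := value_pk (n := n) (fun _ => true)
  have h4 := h1.2 (by omega)
  refine ⟨fun i => decide ((i, true) ∈ T), ?_⟩
  ext ⟨i, b⟩
  have h5 := h4 i
  unfold cnt at h5
  by_cases ht : (i, true) ∈ T <;> by_cases hf : (i, false) ∈ T <;> cases b <;>
    simp_all [pk]

theorem card_symm {n : ℕ} (x y : Fin n → Bool) :
    (symmDiff (pk x) (pk y)).card = 2 * hammingDist x y := by
  rw [Finset.card_eq_sum_ones, sum_cnt _ (fun _ => 1), hammingDist, Finset.card_filter,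
    Finset.mul_sum]
  refine Finset.sum_congr rfl fun i _ => ?_
  cases hx : x i <;> cases hy : y i <;> simp [cnt, pk, Finset.mem_symmDiff, hx, hy]

/-- There exist `m` pairwise distinct optimal packings of `I n` with pairwise symmetric
difference at least `2d` if and only if `A₂(n, d) ≥ m`. -/
theorem diverse_optimal_packings_iff_code (n d m : ℕ)
    (hn : 1 ≤ n) (hd : 1 ≤ d) (hm : 1 ≤ m) :
    (∃ T : Fin m → Finset (Fin n × Bool),
      Function.Injective T ∧
      (∀ a : Fin m, IsOptimalPacking n (T a)) ∧
      (∀ a b : Fin m, a ≠ b → 2 * d ≤ (symmDiff (T a) (T b)).card)) ↔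
    m ≤ A2 n d := by
  have hbdd : BddAbove {m | ∃ C : Finset (Fin n → Bool), C.card = m ∧
      ∀ x ∈ C, ∀ y ∈ C, x ≠ y → d ≤ hammingDist x y} := by
    refine ⟨Fintype.card (Fin n → Bool), ?_⟩
    rintro _ ⟨C, rfl, _⟩
    exact Finset.card_le_univ C
  constructor
  · rintro ⟨T, hT, ho, hs⟩
    choose x hx using fun a => pk_of_opt (T a) (ho a)
    have hinj : Function.Injective x := fun a b hab => hT (by rw [hx, hx, hab])
    refine le_csSup hbdd ⟨Finset.univ.image x, ?_, ?_⟩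
    · rw [Finset.card_image_of_injective _ hinj]; simp
    · intro u hu v hv huv
      simp only [Finset.mem_image, Finset.mem_univ, true_and] at hu hv
      obtain ⟨a, rfl⟩ := hu
      obtain ⟨b, rfl⟩ := hv
      have := hs a b (fun h => huv (by rw [h]))
      rw [hx a, hx b, card_symm] at this
      omega
  · intro h
    obtain ⟨C, hC, hd'⟩ := Nat.sSup_mem (s := {m | ∃ C : Finset (Fin n → Bool), C.card = m ∧
      ∀ x ∈ C, ∀ y ∈ C, x ≠ y → d ≤ hammingDist x y}) ⟨0, ∅, by simp⟩ hbdd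
    have hmC : m ≤ C.card := by rw [hC]; exact h
    let e : Fin m → (Fin n → Bool) := fun a => (C.equivFin.symm (Fin.castLE hmC a)).1
    have he : Function.Injective e := fun a b hab =>
      Fin.castLE_injective hmC (C.equivFin.symm.injective (Subtype.ext hab))
    have key : ∀ a b : Fin m, a ≠ b → 2 * d ≤ (symmDiff (pk (e a)) (pk (e b))).card := by
      intro a b hab
      rw [card_symm]
      have := hd' (e a) (Subtype.prop _) (e b) (Subtype.prop _) (he.ne hab)
      omega
    refine ⟨fun a => pk (e a), ?_, fun a => opt_pk _, key⟩
    intro a b hab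
    by_contra hne
    have := key a b hne
    simp only at hab
    rw [hab] at this
    simp at this
    omega
end

section
/- Let n, d, m ≥ 1 be integers and let G_n be the directed graph with vertex set {s, t} ∪ {1,…,n} and edges (s,i) and (i,t) for each i ∈ {1,…,n}. Then there exist m pairwise distinct minimum st-cuts C_1, …, C_m of G_n with |C_a Δ C_b| ≥ 2d for all a ≠ b if and only if A_2(n, d) ≥ m. -/
open Finset

/-- Vertices of the graph `G n`: `Sum.inl i` is the vertex `i ∈ {1,…,n}`,
`Sum.inr false` is the source `s`, and `Sum.inr true` is the sink `t`. -/
abbrev GVtx (n : ℕ) := Fin n ⊕ Bool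

/-- The source vertex `s` of `G n`. -/
def gs (n : ℕ) : GVtx n := Sum.inr false

/-- The sink vertex `t` of `G n`. -/
def gt (n : ℕ) : GVtx n := Sum.inr true

/-- The edge set of `G n`: a directed edge `(s, i)` and a directed edge `(i, t)` for each
`i ∈ {1,…,n}`. -/
def gEdges (n : ℕ) : Finset (GVtx n × GVtx n) :=
  (Finset.univ.image fun i : Fin n => (gs n, Sum.inl i)) ∪
  (Finset.univ.image fun i : Fin n => (Sum.inl i, gt n))

/-- An `st`-cut of `G n`: a subset `C` of the edges such that after deleting the edges of
`C` there is no directed path from `s` to `t`. -/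
def IsStCut (n : ℕ) (C : Finset (GVtx n × GVtx n)) : Prop :=
  C ⊆ gEdges n ∧
  ¬ Relation.ReflTransGen (fun u v => (u, v) ∈ gEdges n ∧ (u, v) ∉ C) (gs n) (gt n)

/-- A minimum `st`-cut of `G n`: an `st`-cut of minimum cardinality. -/
def IsMinStCut (n : ℕ) (C : Finset (GVtx n × GVtx n)) : Prop :=
  IsStCut n C ∧ ∀ C' : Finset (GVtx n × GVtx n), IsStCut n C' → C.card ≤ C'.card

/-- The edge at `i` selected by a bit. -/
def ed (n : ℕ) (p : Fin n × Bool) : GVtx n × GVtx n :=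
  if p.2 then (gs n, Sum.inl p.1) else (Sum.inl p.1, gt n)

theorem ed_inj (n : ℕ) : Function.Injective (ed n) := by
  rintro ⟨i, b⟩ ⟨j, c⟩ h
  cases b <;> cases c <;> simp_all [ed, gs, gt]

theorem ed_mem (n : ℕ) (p : Fin n × Bool) : ed n p ∈ gEdges n := by
  obtain ⟨i, b⟩ := p
  cases b <;> simp [ed, gEdges, gs, gt]

/-- The cut of a word. -/
def wcut (n : ℕ) (x : Fin n → Bool) : Finset (GVtx n × GVtx n) :=
  Finset.univ.image fun i => ed n (i, x i)

theorem mem_wcut (n : ℕ) (x : Fin n → Bool) (i : Fin n) (b : Bool) :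
    ed n (i, b) ∈ wcut n x ↔ x i = b := by
  simp only [wcut, Finset.mem_image, Finset.mem_univ, true_and]
  constructor
  · rintro ⟨j, hj⟩
    have := ed_inj n hj
    simp only [Prod.mk.injEq] at this
    obtain ⟨rfl, h⟩ := this
    exact h
  · rintro rfl
    exact ⟨i, rfl⟩

theorem wcut_card (n : ℕ) (x : Fin n → Bool) : (wcut n x).card = n := by
  rw [wcut, Finset.card_image_of_injective]
  · simp
  · intro i j h
    have := ed_inj n h
    simp only [Prod.mk.injEq] at this
    exact this.1

theorem wcut_inj (n : ℕ) : Function.Injective (wcut n) := by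
  intro x y h
  funext i
  have h1 := (mem_wcut n x i (x i)).2 rfl
  rw [h, mem_wcut] at h1
  exact h1.symm

theorem wcut_cut (n : ℕ) (x : Fin n → Bool) : IsStCut n (wcut n x) := by
  constructor
  · intro e he
    simp only [wcut, Finset.mem_image, Finset.mem_univ, true_and] at he
    obtain ⟨i, rfl⟩ := he
    exact ed_mem n _
  · intro h
    have key : ∀ v, Relation.ReflTransGen
        (fun u v => (u, v) ∈ gEdges n ∧ (u, v) ∉ wcut n x) (gs n) v →
        v = gs n ∨ ∃ i, v = Sum.inl i ∧ x i = false := by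
      intro v hv
      induction hv with
      | refl => exact Or.inl rfl
      | @tail b c _ hbc ih =>
        obtain ⟨he, hc⟩ := hbc
        simp only [gEdges, Finset.mem_union, Finset.mem_image, Finset.mem_univ, true_and,
          Prod.mk.injEq] at he
        rcases he with ⟨i, rfl, rfl⟩ | ⟨i, rfl, rfl⟩
        · right
          refine ⟨i, rfl, ?_⟩
          have := mem_wcut n x i true
          simp only [ed, if_true] at this
          rw [this] at hc
          simpa using hc
        · exfalso
          rcases ih with ih | ⟨j, hj, hx⟩
          · simp [gs] at ih
          · obtain rfl := Sum.inl_injective hj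
            apply hc
            have := mem_wcut n x i false
            simp only [ed] at this
            exact this.2 hx
    rcases key _ h with h | ⟨i, h, _⟩
    · simp [gs, gt] at h
    · simp [gt] at h

theorem exists_wcut (n : ℕ) (C : Finset (GVtx n × GVtx n)) (hC : IsStCut n C) :
    ∃ x, wcut n x ⊆ C := by
  have h : ∀ i : Fin n, ∃ b, ed n (i, b) ∈ C := by
    intro i
    by_contra! h
    apply hC.2
    refine Relation.ReflTransGen.tail (b := Sum.inl i) (Relation.ReflTransGen.single ?_) ?_
    · exact ⟨by simpa [ed] using ed_mem n (i, true), by simpa [ed] using h true⟩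
    · exact ⟨by simpa [ed] using ed_mem n (i, false), by simpa [ed] using h false⟩
  choose x hx using h
  refine ⟨x, ?_⟩
  intro e he
  simp only [wcut, Finset.mem_image, Finset.mem_univ, true_and] at he
  obtain ⟨i, rfl⟩ := he
  exact hx i

theorem wcut_min (n : ℕ) (x : Fin n → Bool) : IsMinStCut n (wcut n x) := by
  refine ⟨wcut_cut n x, fun C' h => ?_⟩
  obtain ⟨y, hy⟩ := exists_wcut n C' h
  have := Finset.card_le_card hy
  rwa [wcut_card] at this ⊢

theorem min_wcut (n : ℕ) (C : Finset (GVtx n × GVtx n)) (h : IsMinStCut n C) :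
    ∃ x, wcut n x = C := by
  obtain ⟨x, hx⟩ := exists_wcut n C h.1
  exact ⟨x, Finset.eq_of_subset_of_card_le hx (h.2 _ (wcut_cut n x))⟩

theorem wcut_symmDiff (n : ℕ) (x y : Fin n → Bool) :
    (symmDiff (wcut n x) (wcut n y)).card = 2 * hammingDist x y := by
  have : symmDiff (wcut n x) (wcut n y) =
      ((Finset.univ.filter fun i => x i ≠ y i) ×ˢ (Finset.univ : Finset Bool)).image (ed n) := by
    ext e
    constructor
    · intro he
      have : ∃ p, ed n p = e := by
        rw [Finset.mem_symmDiff] at he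
        simp only [wcut, Finset.mem_image, Finset.mem_univ, true_and] at he
        rcases he with ⟨⟨i, h⟩, _⟩ | ⟨⟨i, h⟩, _⟩ <;> exact ⟨_, h⟩
      obtain ⟨⟨i, b⟩, rfl⟩ := this
      rw [Finset.mem_symmDiff, mem_wcut, mem_wcut] at he
      refine Finset.mem_image_of_mem _ ?_
      simp only [Finset.mem_product, Finset.mem_filter, Finset.mem_univ, true_and, and_true]
      grind
    · intro he
      obtain ⟨⟨i, b⟩, hp, rfl⟩ := Finset.mem_image.1 he
      simp only [Finset.mem_product, Finset.mem_filter, Finset.mem_univ, true_and, and_true] at hp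
      rw [Finset.mem_symmDiff, mem_wcut, mem_wcut]
      revert hp
      cases x i <;> cases y i <;> cases b <;> simp
  rw [this, Finset.card_image_of_injective _ (ed_inj n), Finset.card_product, mul_comm]
  simp [hammingDist]

/-- There exist `m` pairwise distinct minimum `st`-cuts of `G n` with pairwise symmetric
difference at least `2d` if and only if `A₂(n, d) ≥ m`. -/
theorem diverse_min_cuts_iff_code (n d m : ℕ) (hn : 1 ≤ n) (hd : 1 ≤ d) (hm : 1 ≤ m) :
    (∃ C : Fin m → Finset (GVtx n × GVtx n),
      Function.Injective C ∧
      (∀ a : Fin m, IsMinStCut n (C a)) ∧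
      (∀ a b : Fin m, a ≠ b → 2 * d ≤ (symmDiff (C a) (C b)).card)) ↔
    m ≤ A2 n d := by
  have hA : m ≤ A2 n d ↔ ∃ C : Finset (Fin n → Bool), C.card = m ∧
      ∀ x ∈ C, ∀ y ∈ C, x ≠ y → d ≤ hammingDist x y := by
    have hb : BddAbove {m | ∃ C : Finset (Fin n → Bool), C.card = m ∧
        ∀ x ∈ C, ∀ y ∈ C, x ≠ y → d ≤ hammingDist x y} := by
      refine ⟨Fintype.card (Fin n → Bool), ?_⟩
      rintro _ ⟨C, rfl, _⟩
      exact Finset.card_le_univ C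
    constructor
    · intro h
      have hne : {m | ∃ C : Finset (Fin n → Bool), C.card = m ∧
          ∀ x ∈ C, ∀ y ∈ C, x ≠ y → d ≤ hammingDist x y}.Nonempty := ⟨0, ∅, by simp⟩
      obtain ⟨C, hc, hC⟩ := Nat.sSup_mem hne hb
      obtain ⟨D, hD, hDc⟩ := Finset.exists_subset_card_eq (h.trans hc.ge)
      exact ⟨D, hDc, fun x hx y hy => hC x (hD hx) y (hD hy)⟩
    · intro h
      exact le_csSup hb h
  rw [hA]
  constructor
  · rintro ⟨C, hinj, hmin, hdist⟩
    choose x hx using fun a => min_wcut n (C a) (hmin a)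
    have hxi : Function.Injective x := fun a b h => hinj (by rw [← hx a, ← hx b, h])
    refine ⟨Finset.univ.image x, by rw [Finset.card_image_of_injective _ hxi]; simp, ?_⟩
    intro u hu v hv huv
    obtain ⟨a, _, rfl⟩ := Finset.mem_image.1 hu
    obtain ⟨b, _, rfl⟩ := Finset.mem_image.1 hv
    have := hdist a b (fun h => huv (by rw [h]))
    rw [← hx a, ← hx b, wcut_symmDiff] at this
    omega
  · rintro ⟨C, rfl, hC⟩
    let f := C.equivFin.symm
    refine ⟨fun a => wcut n (f a), ?_, fun a => wcut_min n _, ?_⟩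
    · intro a b h
      exact f.injective (Subtype.ext (wcut_inj n h))
    · intro a b hab
      rw [wcut_symmDiff]
      have := hC (f a) (f a).2 (f b) (f b).2
        (fun h => hab (f.injective (Subtype.ext h)))
      omega
end
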